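/- arXiv:0812.0062 — 2 statements merged into one kernel-verified Lean document; each statement's English description precedes it below -/
import Mathlib

section
/- Let Γ be a finite rooted tree and ⤳ a binary relation on its vertex set V satisfying the P-Enriques-diagram conditions (P1), (P2), (P3) together with: (a) ind(r) ≥ ind(q) whenever r ⪰ q, and (b) whenever r ⤳ q, at most one child s ∈ r⁺ satisfies ¬(s ⤳ q). Then for an integer d ≥ 2 there exists a d-weighting α of Γ with ⤳_α = ⤳ if and only if d ≥ max(2, max_{q∈V}(ind(q) + s(q))). In particular, the minimum dimension of a toric constellation inducing the given P-Enriques diagram equals max(2, max_{q∈V}(ind(q) + s(q))). -/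
/-- A finite rooted tree: a distinguished root, a parent map fixing the root,
and a depth function witnessing that iterating the parent map reaches the root. -/
structure PTree (V : Type) where
  root : V
  parent : V → V
  depth : V → ℕ
  parent_root : parent root = root
  depth_root : depth root = 0
  depth_eq : ∀ v, v ≠ root → depth v = depth (parent v) + 1

namespace PTree

variable {V : Type}

/-- `r ⪰ q` : the descendancy order (`q` lies on the path from `r` to the root). -/
def desc (T : PTree V) (r q : V) : Prop := ∃ k : ℕ, T.parent^[k] r = q

/-- `r ≻ q`. -/
def sdesc (T : PTree V) (r q : V) : Prop := T.desc r q ∧ r ≠ q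

/-- `r ∈ q⁺` : `r` is a child of `q`. -/
def child (T : PTree V) (r q : V) : Prop := T.parent r = q ∧ r ≠ T.root

/-- `w` is a d-weighting of `T` : each non-root vertex gets a weight in `{1,…,d}`,
and distinct children of a common vertex get distinct weights. -/
def IsWeighting (T : PTree V) (d : ℕ) (w : V → ℕ) : Prop :=
  (∀ v, v ≠ T.root → 1 ≤ w v ∧ w v ≤ d) ∧
    ∀ r s, r ≠ T.root → s ≠ T.root → T.parent r = T.parent s → r ≠ s → w r ≠ w s

/-- The length of the path (code) from `q` up to a descendant `r`. -/
def codeLen (T : PTree V) (r q : V) : ℕ := T.depth r - T.depth q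

/-- The proximity relation induced by a weighting: `r ⤳_α q` iff `r ≻ q` and the first
entry of the code of `r` over `q` differs from all the later entries.  (The `j`-th entry
of the code, `1 ≤ j ≤ k`, is the weight of `parent^[k-j] r`, where `k` is the code length.) -/
def prox (T : PTree V) (w : V → ℕ) (r q : V) : Prop :=
  T.sdesc r q ∧ ∀ i, i + 2 ≤ T.codeLen r q →
    w (T.parent^[T.codeLen r q - 1] r) ≠ w (T.parent^[i] r)

end PTree

/-- The proximity index of `q` : the number of vertices `p` with `q ⤳ p`. -/
noncomputable def ind {V : Type} (rel : V → V → Prop) (q : V) : ℕ :=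
  Nat.card {p : V // rel q p}

/-- `s(q)` : the number of children of `q` whose proximity index exceeds that of `q`. -/
noncomputable def PTree.sInd {V : Type} (T : PTree V) (rel : V → V → Prop) (q : V) : ℕ :=
  Nat.card {r : V // T.child r q ∧ ind rel q < ind rel r}

/-- The P-Enriques-diagram conditions (P1), (P2), (P3) on a binary relation `rel`. -/
def PTree.Enriques {V : Type} (T : PTree V) (rel : V → V → Prop) : Prop :=
  (∀ q p, rel q p → T.sdesc q p) ∧
  (∀ q p, T.child q p → rel q p) ∧
  (∀ r p q, T.desc r p → T.sdesc p q → rel r q → rel p q)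

/-- Condition (a): the proximity index is non-decreasing along the descendancy order. -/
def PTree.CondA {V : Type} (T : PTree V) (rel : V → V → Prop) : Prop :=
  ∀ r q, T.desc r q → ind rel q ≤ ind rel r

/-- Condition (b): whenever `r ⤳ q`, at most one child `s` of `r` satisfies `¬ s ⤳ q`. -/
def PTree.CondB {V : Type} (T : PTree V) (rel : V → V → Prop) : Prop :=
  ∀ r q, rel r q → ∀ s s', T.child s r → T.child s' r → ¬ rel s q → ¬ rel s' q → s = s'

/-!
Let `q⟨p⟩` be the child of `p` on the path to `q`. A child `r` of `q` is proximate to `q`, and it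
is proximate to those `p` with `q ⤳_α p` for which `α r ≠ α q⟨p⟩`. The weights `α q⟨p⟩`, for `p`
running over the vertices to which `q` is proximate, are pairwise distinct. A child whose index
exceeds that of `q` loses no proximity, so its weight avoids these `ind q` values; as children of
`q` have distinct weights, `ind q + s q ≤ d`.

Conversely, weights can be chosen down the tree. By (a), a child `r` of `q` whose index does not
grow loses exactly one proximity `p`, and is forced to have weight `α q⟨p⟩`; by (b) no two
children of `q` are forced to the same weight. The remaining `s q` children get distinct weights
among the `d - ind q` values different from all `α q⟨p⟩`.
-/

namespace PTree

open Set

variable {V : Type} {T : PTree V} {rel : V → V → Prop} {w : V → ℕ} {d : ℕ} {p q r : V}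

/-! ### Descendancy -/

lemma child_parent (hr : r ≠ T.root) : T.child r (T.parent r) := ⟨rfl, hr⟩

lemma child.depth_eq (h : T.child r q) : T.depth r = T.depth q + 1 :=
  h.1 ▸ T.depth_eq r h.2

lemma child.desc (h : T.child r q) : T.desc r q := ⟨1, h.1⟩

lemma induction_on_child {motive : V → Prop} (root : motive T.root)
    (child : ∀ r q, T.child r q → motive q → motive r) (v : V) : motive v := by
  induction hn : T.depth v generalizing v with
  | zero =>
    have hv : v = T.root := by
      by_contra hv
      have := T.depth_eq v hv
      omega
    exact hv ▸ root
  | succ n ih =>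
    have hv : T.child v (T.parent v) := child_parent <| by
      rintro rfl
      simp [T.depth_root] at hn
    exact child v _ hv (ih _ (by have := hv.depth_eq; omega))

lemma desc_root_iff : T.desc T.root p ↔ p = T.root := by
  simp [desc, Function.iterate_fixed T.parent_root, eq_comm]

lemma not_sdesc_root : ¬ T.sdesc T.root p :=
  fun h => h.2 (desc_root_iff.1 h.1).symm

lemma child.desc_iff (h : T.child r q) : T.desc r p ↔ p = r ∨ T.desc q p := by
  constructor
  · rintro ⟨_ | k, hk⟩
    · exact .inl hk.symm
    · exact .inr ⟨k, by rwa [Function.iterate_succ_apply, h.1] at hk⟩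
  · rintro (rfl | ⟨k, hk⟩)
    · exact ⟨0, rfl⟩
    · exact ⟨k + 1, by rwa [Function.iterate_succ_apply, h.1]⟩

lemma desc.depth_le (h : T.desc r q) : T.depth q ≤ T.depth r := by
  induction r using T.induction_on_child with
  | root => rw [desc_root_iff.1 h]
  | child r s hrs ih =>
    rcases hrs.desc_iff.1 h with rfl | hsq
    · rfl
    · exact (ih hsq).trans (by simp [hrs.depth_eq])

lemma depth_iterate_parent_le (k : ℕ) (v : V) : T.depth (T.parent^[k] v) ≤ T.depth v :=
  desc.depth_le ⟨k, rfl⟩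

lemma child.sdesc_iff_desc (h : T.child r q) : T.sdesc r p ↔ T.desc q p := by
  rw [sdesc, h.desc_iff]
  have ne_of_desc : T.desc q p → r ≠ p := by
    rintro hqp rfl
    have := hqp.depth_le
    have := h.depth_eq
    omega
  grind

lemma child.sdesc_iff (h : T.child r q) : T.sdesc r p ↔ p = q ∨ T.sdesc q p := by
  rw [h.sdesc_iff_desc, sdesc]
  have desc_self : T.desc q q := ⟨0, rfl⟩
  grind

lemma sdesc.depth_lt (h : T.sdesc r q) : T.depth q < T.depth r := by
  by_cases hr : r = T.root
  · exact absurd (hr ▸ h) not_sdesc_root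
  · have := ((child_parent hr).sdesc_iff_desc.1 h).depth_le
    have := (child_parent hr).depth_eq
    omega

lemma sdesc.codeLen_pos (h : T.sdesc r q) : 0 < T.codeLen r q :=
  Nat.sub_pos_of_lt h.depth_lt

lemma finite_setOf_desc (r : V) : {p | T.desc r p}.Finite := by
  induction r using T.induction_on_child with
  | root => simp [desc_root_iff]
  | child r q h ih =>
    have : {p | T.desc r p} = insert r {p | T.desc q p} := Set.ext fun _ => h.desc_iff
    exact this ▸ ih.insert r

/-! ### The proximity relation of a weighting -/

/-- The child of `q` on the path to `r`, when `r ≻ q`. Its weight is the first entry of the code of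
`r` over `q`. -/
def branch (T : PTree V) (r q : V) : V := T.parent^[T.codeLen r q - 1] r

lemma child.branch_self (h : T.child r q) : T.branch r q = r := by
  simp [branch, codeLen, h.depth_eq]

lemma child.codeLen_of_sdesc (h : T.child r q) (hq : T.sdesc q p) :
    T.codeLen r p = T.codeLen q p + 1 := by
  have := hq.depth_lt
  have := h.depth_eq
  unfold codeLen
  omega

lemma child.branch_of_sdesc (h : T.child r q) (hq : T.sdesc q p) :
    T.branch r p = T.branch q p := by
  obtain ⟨k, hk⟩ := Nat.exists_eq_succ_of_ne_zero hq.codeLen_pos.ne'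
  rw [branch, branch, h.codeLen_of_sdesc hq, hk]
  simp [h.1]

lemma child.prox_iff (h : T.child r q) :
    T.prox w r p ↔ p = q ∨ T.prox w q p ∧ w r ≠ w (T.branch q p) := by
  unfold prox
  rw [h.sdesc_iff]
  by_cases hpq : p = q
  · subst hpq
    simp only [true_or, true_and, iff_true, codeLen, h.depth_eq]
    omega
  by_cases hq : T.sdesc q p
  · have hpos := hq.codeLen_pos
    have hbranch := h.branch_of_sdesc hq
    unfold branch at hbranch ⊢
    rw [hbranch, h.codeLen_of_sdesc hq]
    simp only [hpq, hq, false_or, or_true, true_and]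
    constructor
    · intro hne
      refine ⟨fun i hi => ?_, (hne 0 (by omega)).symm⟩
      simpa [h.1] using hne (i + 1) (by omega)
    · rintro ⟨hne, hr⟩ (_ | i) hi
      · exact hr.symm
      · simpa [h.1] using hne i (by omega)
  · simp [hpq, hq]

lemma sdesc.branch_ne_root (h : T.sdesc q p) : T.branch q p ≠ T.root := by
  induction q using T.induction_on_child with
  | root => exact absurd h not_sdesc_root
  | child r q hrq ih =>
    rcases hrq.sdesc_iff.1 h with rfl | hqp
    · rw [hrq.branch_self]
      exact hrq.2
    · rw [hrq.branch_of_sdesc hqp]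
      exact ih hqp

lemma injOn_comp_branch (w : V → ℕ) (q : V) : InjOn (w ∘ T.branch q) {p | T.prox w q p} := by
  induction q using T.induction_on_child with
  | root => exact fun p hp => absurd hp.1 not_sdesc_root
  | child r q h ih =>
    intro p hp p' hp' heq
    simp only [mem_ofPred_eq, h.prox_iff, Function.comp_apply] at hp hp' heq
    rcases hp with rfl | ⟨hp, hne⟩ <;> rcases hp' with rfl | ⟨hp', hne'⟩
    · rfl
    · rw [h.branch_self, h.branch_of_sdesc hp'.1] at heq
      exact absurd heq hne'
    · rw [h.branch_self, h.branch_of_sdesc hp.1] at heq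
      exact absurd heq.symm hne
    · rw [h.branch_of_sdesc hp.1, h.branch_of_sdesc hp'.1] at heq
      exact ih hp hp' heq

theorem enriques_prox (T : PTree V) (w : V → ℕ) : T.Enriques (T.prox w) := by
  refine ⟨fun q p h => h.1, fun q p h => h.prox_iff.2 (.inl rfl), fun r p q hrp hpq hrq => ?_⟩
  induction r using T.induction_on_child with
  | root => exact absurd hrq.1 not_sdesc_root
  | child r s hrs ih =>
    rcases hrs.desc_iff.1 hrp with rfl | hsp
    · exact hrq
    · rcases hrs.prox_iff.1 hrq with rfl | ⟨hsq, -⟩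
      · exact absurd hsp.depth_le hpq.depth_lt.not_ge
      · exact ih hsp hsq

/-! ### Proximities of a child -/

/-- The children of `q` counted by `T.sInd rel q`. -/
def risingChildren (T : PTree V) (rel : V → V → Prop) (q : V) : Set V :=
  {r | T.child r q ∧ ind rel q < ind rel r}

lemma ind_eq_ncard (rel : V → V → Prop) (q : V) : ind rel q = {p | rel q p}.ncard := rfl

lemma sInd_eq_ncard (T : PTree V) (rel : V → V → Prop) (q : V) :
    T.sInd rel q = (T.risingChildren rel q).ncard := rfl

lemma Enriques.finite_setOf_rel (hE : T.Enriques rel) (q : V) : {p | rel q p}.Finite :=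
  (finite_setOf_desc q).subset fun _ hp => (hE.1 _ _ hp).1

lemma Enriques.eq_or_rel_of_child (hE : T.Enriques rel) (h : T.child r q) (hr : rel r p) :
    p = q ∨ rel q p :=
  (h.sdesc_iff.1 (hE.1 _ _ hr)).imp_right fun hq => hE.2.2 r q p h.desc hq hr

lemma Enriques.ncard_diff_add_ind (hE : T.Enriques rel) (h : T.child r q) :
    ({p | rel q p} \ {p | rel r p}).ncard + ind rel r = ind rel q + 1 := by
  have hsub : {p | rel r p} ⊆ insert q {p | rel q p} := fun p hp => hE.eq_or_rel_of_child h hp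
  have hr : q ∈ {p | rel r p} := hE.2.1 _ _ h
  have hq : q ∉ {p | rel q p} := fun hqq => (hE.1 _ _ hqq).2 rfl
  calc ({p | rel q p} \ {p | rel r p}).ncard + ind rel r
      = (insert q {p | rel q p} \ {p | rel r p}).ncard + {p | rel r p}.ncard := by
        rw [insert_sdiff_of_mem _ hr, ind_eq_ncard]
    _ = (insert q {p | rel q p}).ncard :=
        ncard_sdiff_add_ncard_of_subset hsub ((hE.finite_setOf_rel q).insert q)
    _ = ind rel q + 1 := by rw [ncard_insert_of_notMem hq (hE.finite_setOf_rel q), ind_eq_ncard]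

lemma Enriques.rel_of_ind_lt (hE : T.Enriques rel) (h : T.child r q)
    (hlt : ind rel q < ind rel r) (hp : rel q p) : rel r p := by
  have hzero : ({p | rel q p} \ {p | rel r p}).ncard = 0 := by
    have := hE.ncard_diff_add_ind h
    omega
  rw [ncard_eq_zero (hE.finite_setOf_rel q).sdiff, sdiff_eq_empty] at hzero
  exact hzero hp

lemma Enriques.exists_rel_and_not_rel_iff_eq (hE : T.Enriques rel) (h : T.child r q)
    (heq : ind rel r = ind rel q) : ∃ p, ∀ x, rel q x ∧ ¬ rel r x ↔ x = p := by
  have := hE.ncard_diff_add_ind h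
  obtain ⟨p, hp⟩ := ncard_eq_one.1 (show ({p | rel q p} \ {p | rel r p}).ncard = 1 by omega)
  exact ⟨p, Set.ext_iff.1 hp⟩

/-! ### Necessity -/

lemma IsWeighting.mapsTo_children (hw : T.IsWeighting d w) (q : V) :
    MapsTo w {r | T.child r q} (Icc 1 d) :=
  fun r hr => hw.1 r hr.2

lemma IsWeighting.injOn_children (hw : T.IsWeighting d w) (q : V) :
    InjOn w {r | T.child r q} := by
  intro r hr s hs heq
  by_contra hne
  exact hw.2 r s hr.2 hs.2 (hr.1.trans hs.1.symm) hne heq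

lemma IsWeighting.finite_children (hw : T.IsWeighting d w) (q : V) : {r | T.child r q}.Finite :=
  .of_injOn (hw.mapsTo_children q) (hw.injOn_children q) (finite_Icc 1 d)

theorem IsWeighting.ind_add_sInd_le (hw : T.IsWeighting d w) (q : V) :
    ind (T.prox w) q + T.sInd (T.prox w) q ≤ d := by
  have hE := enriques_prox T w
  set P := {p | T.prox w q p}
  set S := T.risingChildren (T.prox w) q
  have hS : S ⊆ {r | T.child r q} := fun r hr => hr.1
  have hdisj : Disjoint ((w ∘ T.branch q) '' P) (w '' S) := by
    rw [disjoint_left]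
    rintro _ ⟨p, hqp, rfl⟩ ⟨r, ⟨hrq, hlt⟩, heq⟩
    rcases hrq.prox_iff.1 (hE.rel_of_ind_lt hrq hlt hqp) with rfl | ⟨-, hne⟩
    · exact hqp.1.2 rfl
    · exact hne heq
  have hsub : (w ∘ T.branch q) '' P ∪ w '' S ⊆ Icc 1 d := by
    refine union_subset (image_subset_iff.2 fun p hp => ?_)
      (image_subset_iff.2 ((hw.mapsTo_children q).mono_left hS))
    exact hw.1 _ hp.1.branch_ne_root
  calc ind (T.prox w) q + T.sInd (T.prox w) q
      = ((w ∘ T.branch q) '' P).ncard + (w '' S).ncard := by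
        rw [(injOn_comp_branch w q).ncard_image, ((hw.injOn_children q).mono hS).ncard_image,
          ind_eq_ncard, sInd_eq_ncard]
    _ = ((w ∘ T.branch q) '' P ∪ w '' S).ncard :=
        (ncard_union_eq hdisj ((hE.finite_setOf_rel q).image _)
          (((hw.finite_children q).subset hS).image w)).symm
    _ ≤ (Icc 1 d).ncard := ncard_le_ncard hsub (finite_Icc 1 d)
    _ = d := by simp [ncard_eq_toFinset_card']

/-! ### Sufficiency -/

/-- `g` is an admissible choice of weights in `{1,…,d}` for the children of `q`, where `c p` stands
for the first entry of the code of `q` over `p`, already chosen when `q ⤳ p`. -/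
structure IsLocalWeighting (T : PTree V) (rel : V → V → Prop) (d : ℕ) (q : V) (c g : V → ℕ) :
    Prop where
  mapsTo : MapsTo g {r | T.child r q} (Icc 1 d)
  injOn : InjOn g {r | T.child r q}
  rel_iff : ∀ r p, T.child r q → rel q p → (rel r p ↔ g r ≠ c p)

lemma exists_injOn_mapsTo_diff_image {α β γ : Type*} [Nonempty γ] {P : Set α} {S : Set β}
    {t : Set γ} (hP : P.Finite) (hS : S.Finite) (c : α → γ) (h : P.ncard + S.ncard ≤ t.ncard) :
    ∃ f : β → γ, MapsTo f S (t \ c '' P) ∧ InjOn f S := by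
  refine hS.exists_injOn_of_encard_le ?_
  have himage := ncard_image_le (f := c) hP
  have hdiff := ncard_le_ncard_sdiff_add_ncard t (c '' P) (hP.image c)
  calc S.encard = S.ncard := hS.cast_ncard_eq.symm
    _ ≤ (t \ c '' P).ncard := by
        norm_cast
        omega
    _ ≤ (t \ c '' P).encard := ncard_le_encard _

lemma CondB.eq_of_forall_rel_iff_ne (hB : T.CondB rel) {c g : V → ℕ} {s : V}
    (hg : ∀ r p, T.child r q → rel q p → (rel r p ↔ g r ≠ c p)) (hp : rel q p)
    (hr : T.child r q) (hs : T.child s q) (hgr : g r = c p) (hgs : g s = c p) : r = s :=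
  hB q p hp r s hr hs (fun h => (hg r p hr hp).1 h hgr) fun h => (hg s p hs hp).1 h hgs

lemma CondB.isLocalWeighting_piecewise (hB : T.CondB rel) {c fresh : V → ℕ} {lost : V → V}
    {S : Set V} [∀ r, Decidable (r ∈ S)] (hc : MapsTo c {p | rel q p} (Icc 1 d))
    (hinj : InjOn c {p | rel q p}) (hkeep : ∀ r p, T.child r q → r ∈ S → rel q p → rel r p)
    (hlost : ∀ r, T.child r q → r ∉ S → ∀ p, rel q p ∧ ¬ rel r p ↔ p = lost r)
    (hfresh : MapsTo fresh S (Icc 1 d \ c '' {p | rel q p})) (hfresh_inj : InjOn fresh S) :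
    T.IsLocalWeighting rel d q c (S.piecewise fresh (c ∘ lost)) := by
  have rel_lost (r : V) (hr : T.child r q) (hrS : r ∉ S) : rel q (lost r) :=
    ((hlost r hr hrS _).2 rfl).1
  set g := S.piecewise fresh (c ∘ lost)
  have g_of_mem (r : V) (hrS : r ∈ S) : g r = fresh r := piecewise_eq_of_mem _ _ _ hrS
  have g_of_notMem (r : V) (hrS : r ∉ S) : g r = c (lost r) := piecewise_eq_of_notMem _ _ _ hrS
  have rel_iff (r p : V) (hr : T.child r q) (hp : rel q p) : rel r p ↔ g r ≠ c p := by
    by_cases hrS : r ∈ S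
    · rw [g_of_mem r hrS]
      exact iff_of_true (hkeep r p hr hrS hp) fun heq => (hfresh hrS).2 ⟨p, hp, heq.symm⟩
    · rw [g_of_notMem r hrS, Ne, hinj.eq_iff (rel_lost r hr hrS) hp, eq_comm, ← hlost r hr hrS]
      tauto
  have eq_of_notMem (r s : V) (hr : T.child r q) (hs : T.child s q) (hrS : r ∉ S)
      (heq : g r = g s) : r = s :=
    hB.eq_of_forall_rel_iff_ne rel_iff (rel_lost r hr hrS) hr hs (g_of_notMem r hrS)
      (heq ▸ g_of_notMem r hrS)
  refine ⟨fun r hr => ?_, fun r hr s hs heq => ?_, rel_iff⟩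
  · by_cases hrS : r ∈ S
    · exact g_of_mem r hrS ▸ (hfresh hrS).1
    · exact g_of_notMem r hrS ▸ hc (rel_lost r hr hrS)
  · by_cases hrS : r ∈ S
    · by_cases hsS : s ∈ S
      · exact hfresh_inj hrS hsS (by rwa [← g_of_mem r hrS, ← g_of_mem s hsS])
      · exact (eq_of_notMem s r hs hr hsS heq.symm).symm
    · exact eq_of_notMem r s hr hs hrS heq

theorem Enriques.exists_isLocalWeighting (hE : T.Enriques rel) (hA : T.CondA rel)
    (hB : T.CondB rel) (hfin : (T.risingChildren rel q).Finite)
    (hle : ind rel q + T.sInd rel q ≤ d) {c : V → ℕ} (hc : MapsTo c {p | rel q p} (Icc 1 d))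
    (hinj : InjOn c {p | rel q p}) : ∃ g, T.IsLocalWeighting rel d q c g := by
  classical
  obtain ⟨fresh, hfresh, hfresh_inj⟩ : ∃ f : V → ℕ,
      MapsTo f (T.risingChildren rel q) (Icc 1 d \ c '' {p | rel q p}) ∧
        InjOn f (T.risingChildren rel q) := by
    refine exists_injOn_mapsTo_diff_image (hE.finite_setOf_rel q) hfin c ?_
    simpa [ncard_eq_toFinset_card', ind_eq_ncard, sInd_eq_ncard] using hle
  have exists_lost (r : V) (hr : T.child r q) (hrS : r ∉ T.risingChildren rel q) :
      ∃ p, ∀ x, rel q x ∧ ¬ rel r x ↔ x = p :=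
    hE.exists_rel_and_not_rel_iff_eq hr <|
      (hA r q hr.desc).antisymm' (not_lt.1 fun hlt => hrS ⟨hr, hlt⟩)
  choose! lost hlost using exists_lost
  have hkeep (r p : V) (hr : T.child r q) (hrS : r ∈ T.risingChildren rel q) (hp : rel q p) :
      rel r p := hE.rel_of_ind_lt hr hrS.2 hp
  exact ⟨_, hB.isLocalWeighting_piecewise hc hinj hkeep hlost hfresh hfresh_inj⟩

open Classical in
/-- The weighting obtained by weighting the children of each `q` by `G q c`, where `c p` is the
weight already given to `T.branch q p`. The root gets the irrelevant weight `0`. -/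
noncomputable def recWeight (T : PTree V) (G : V → (V → ℕ) → V → ℕ) (r : V) : ℕ :=
  if _ : r = T.root then 0
  else G (T.parent r) (fun p => recWeight T G (T.branch (T.parent r) p)) r
termination_by T.depth r
decreasing_by
  rw [T.depth_eq r ‹_›]
  exact Nat.lt_succ_of_le (depth_iterate_parent_le _ _)

lemma child.recWeight_eq (h : T.child r q) (G : V → (V → ℕ) → V → ℕ) :
    T.recWeight G r = G q (T.recWeight G ∘ T.branch q) r := by
  rw [recWeight, dif_neg h.2, h.1]
  rfl

lemma IsLocalWeighting.prox_iff_of_child (hE : T.Enriques rel)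
    (hw : T.IsLocalWeighting rel d q (w ∘ T.branch q) w) (hq : ∀ p, T.prox w q p ↔ rel q p)
    (h : T.child r q) (p : V) : T.prox w r p ↔ rel r p := by
  rw [h.prox_iff, hq]
  constructor
  · rintro (rfl | ⟨hqp, hne⟩)
    · exact hE.2.1 _ _ h
    · exact (hw.rel_iff r p h hqp).2 hne
  · intro hrp
    exact (hE.eq_or_rel_of_child h hrp).imp_right
      fun hqp => ⟨hqp, (hw.rel_iff r p h hqp).1 hrp⟩

lemma IsLocalWeighting.mapsTo_of_child (hE : T.Enriques rel)
    (hw : T.IsLocalWeighting rel d q (w ∘ T.branch q) w)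
    (hq : MapsTo (w ∘ T.branch q) {p | rel q p} (Icc 1 d)) (h : T.child r q) :
    MapsTo (w ∘ T.branch r) {p | rel r p} (Icc 1 d) := by
  intro p hrp
  rcases hE.eq_or_rel_of_child h hrp with rfl | hqp
  · rw [Function.comp_apply, h.branch_self]
    exact hw.mapsTo h
  · rw [Function.comp_apply, h.branch_of_sdesc (hE.1 _ _ hqp)]
    exact hq hqp

lemma isWeighting_of_isLocalWeighting
    (hw : ∀ q, T.IsLocalWeighting rel d q (w ∘ T.branch q) w) : T.IsWeighting d w :=
  ⟨fun v hv => (hw (T.parent v)).mapsTo (child_parent hv),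
    fun r _ hr hs hrs => mt fun heq =>
      (hw (T.parent r)).injOn (child_parent hr) (hrs ▸ child_parent hs) heq⟩

theorem Enriques.exists_isWeighting (hE : T.Enriques rel) (hA : T.CondA rel) (hB : T.CondB rel)
    (h : ∀ q, (T.risingChildren rel q).Finite ∧ ind rel q + T.sInd rel q ≤ d) :
    ∃ w, T.IsWeighting d w ∧ ∀ r q, T.prox w r q ↔ rel r q := by
  have hlocal (q : V) (c : V → ℕ) (hc : MapsTo c {p | rel q p} (Icc 1 d))
      (hinj : InjOn c {p | rel q p}) : ∃ g, T.IsLocalWeighting rel d q c g :=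
    hE.exists_isLocalWeighting hA hB (h q).1 (h q).2 hc hinj
  choose! G hG using hlocal
  set w := T.recWeight G
  have isLocal (q : V) (hprox : ∀ p, T.prox w q p ↔ rel q p)
      (hmaps : MapsTo (w ∘ T.branch q) {p | rel q p} (Icc 1 d)) :
      T.IsLocalWeighting rel d q (w ∘ T.branch q) w := by
    have hinj : InjOn (w ∘ T.branch q) {p | rel q p} := by
      simpa only [hprox] using injOn_comp_branch (T := T) w q
    have hGq := hG q _ hmaps hinj
    have heq : EqOn (G q (w ∘ T.branch q)) w {r | T.child r q} :=
      fun r hr => (child.recWeight_eq hr G).symm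
    exact ⟨hGq.mapsTo.congr heq, hGq.injOn.congr heq,
      fun r p hr hp => heq hr ▸ hGq.rel_iff r p hr hp⟩
  have invariant (q : V) : (∀ p, T.prox w q p ↔ rel q p) ∧
      MapsTo (w ∘ T.branch q) {p | rel q p} (Icc 1 d) := by
    induction q using T.induction_on_child with
    | root =>
      have hroot (p : V) : ¬ rel T.root p := fun hp => not_sdesc_root (hE.1 _ _ hp)
      exact ⟨fun p => iff_of_false (fun hp => not_sdesc_root hp.1) (hroot p),
        fun p hp => absurd hp (hroot p)⟩
    | child r q hrq ih =>
      have hloc := isLocal q ih.1 ih.2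
      exact ⟨hloc.prox_iff_of_child hE ih.1 hrq, hloc.mapsTo_of_child hE ih.2 hrq⟩
  exact ⟨w, isWeighting_of_isLocalWeighting fun q => isLocal q (invariant q).1 (invariant q).2,
    fun r => (invariant r).1⟩

end PTree

theorem toric_PEnriques_min_dimension_general {V : Type} (T : PTree V) (rel : V → V → Prop)
    (hE : T.Enriques rel) (hA : T.CondA rel) (hB : T.CondB rel) (d : ℕ) :
    (∃ w : V → ℕ, T.IsWeighting d w ∧ ∀ r q, T.prox w r q ↔ rel r q) ↔
      ∀ q, (T.risingChildren rel q).Finite ∧ ind rel q + T.sInd rel q ≤ d := by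
  refine ⟨?_, hE.exists_isWeighting hA hB⟩
  rintro ⟨w, hw, hprox⟩ q
  obtain rfl : T.prox w = rel := funext₂ fun r q => propext (hprox r q)
  exact ⟨(hw.finite_children q).subset fun r hr => hr.1, hw.ind_add_sInd_le q⟩

/-- Under the P-Enriques-diagram conditions together with conditions (a)
and (b), for an integer `d ≥ 2` there exists a `d`-weighting `α` with `⤳_α = ⤳` if and
only if `d ≥ max (2, max_q (ind q + s q))`.  In particular, the minimum dimension of a
toric constellation inducing the given P-Enriques diagram is `max (2, max_q (ind q + s q))`. -/
theorem toric_PEnriques_min_dimension {V : Type} [Fintype V] (T : PTree V)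
    (rel : V → V → Prop) (hE : T.Enriques rel) (hA : T.CondA rel) (hB : T.CondB rel)
    (d : ℕ) (hd : 2 ≤ d) :
    (∃ w : V → ℕ, T.IsWeighting d w ∧ ∀ r q, T.prox w r q ↔ rel r q) ↔
      max 2 (Finset.univ.sup fun q : V => ind rel q + T.sInd rel q) ≤ d := by
  rw [toric_PEnriques_min_dimension_general T rel hE hA hB d]
  simp [hd, Set.toFinite]
end

section
/- For every integer d ≥ 2, every d-weighting α of a finite rooted tree Γ, and all vertices r, q with r ⪰ q, one has ind_α(r) ≥ ind_α(q), where ind_α(q) := #{p ∈ V : q ⤳_α p}. (Necessity of condition (a) — the proximity index is non-decreasing — in the characterization of toric P-Enriques diagrams.) -/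
/-!
The map sending `p` to the first entry of the code of `q` over `p` is a bijection from the vertices
`p` with `q ⤳ p` onto the set of weights on the path from the root to `q`: a weight on that path
comes from the parent `p` of the vertex closest to `q` that carries it. So the index of `q` counts
the distinct weights on this path, and the path of a descendant of `q` extends the path of `q`.
-/

section FirstOccurrences

variable {ι β : Type*} [LinearOrder ι] [DecidableEq β]

/-- The positions `m ∈ s` at which the family `a`, read in increasing order along `s`, takes a value
it has not taken before. -/
def firstOccurrences (s : Finset ι) (a : ι → β) : Finset ι :=
  {m ∈ s | ∀ i ∈ s, i < m → a i ≠ a m}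

theorem mem_firstOccurrences {s : Finset ι} {a : ι → β} {m : ι} :
    m ∈ firstOccurrences s a ↔ m ∈ s ∧ ∀ i ∈ s, i < m → a i ≠ a m :=
  Finset.mem_filter

theorem injOn_firstOccurrences (s : Finset ι) (a : ι → β) :
    Set.InjOn a (firstOccurrences s a) := by
  intro m hm n hn hmn
  obtain ⟨hms, hm_first⟩ := mem_firstOccurrences.1 hm
  obtain ⟨hns, hn_first⟩ := mem_firstOccurrences.1 hn
  rcases lt_trichotomy m n with hlt | heq | hgt
  · exact absurd hmn (hn_first m hms hlt)
  · exact heq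
  · exact absurd hmn.symm (hm_first n hns hgt)

theorem image_firstOccurrences (s : Finset ι) (a : ι → β) :
    (firstOccurrences s a).image a = s.image a := by
  refine (Finset.image_subset_image (Finset.filter_subset _ s)).antisymm ?_
  intro x hx
  have hne : ({i ∈ s | a i = x} : Finset ι).Nonempty := by
    simpa only [Finset.filter_nonempty_iff] using Finset.mem_image.1 hx
  obtain ⟨m, hm, hmin⟩ := Finset.exists_min_image _ id hne
  obtain ⟨hms, rfl⟩ := Finset.mem_filter.1 hm
  have hfirst : ∀ i ∈ s, i < m → a i ≠ a m := fun i his hlt hi =>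
    hlt.not_ge (hmin i (Finset.mem_filter.2 ⟨his, hi⟩))
  exact Finset.mem_image_of_mem a (mem_firstOccurrences.2 ⟨hms, hfirst⟩)

theorem card_firstOccurrences (s : Finset ι) (a : ι → β) :
    (firstOccurrences s a).card = (s.image a).card := by
  rw [← image_firstOccurrences, Finset.card_image_of_injOn (injOn_firstOccurrences s a)]

end FirstOccurrences

namespace PTree

variable {V : Type} (T : PTree V)

theorem depth_parent (v : V) : T.depth (T.parent v) = T.depth v - 1 := by
  by_cases hv : v = T.root
  · rw [hv, T.parent_root, T.depth_root]
  · rw [T.depth_eq v hv, Nat.add_sub_cancel]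

theorem depth_iterate_parent (k : ℕ) (v : V) :
    T.depth (T.parent^[k] v) = T.depth v - k := by
  induction k with
  | zero => rfl
  | succ k ih => rw [Function.iterate_succ_apply', T.depth_parent, ih, Nat.sub_sub]

theorem eq_root_of_depth_eq_zero {v : V} (h : T.depth v = 0) : v = T.root := by
  by_contra hv
  have := T.depth_eq v hv
  omega

theorem iterate_parent_eq_root {k : ℕ} {v : V} (h : T.depth v ≤ k) :
    T.parent^[k] v = T.root :=
  T.eq_root_of_depth_eq_zero (by rw [T.depth_iterate_parent, Nat.sub_eq_zero_of_le h])

theorem codeLen_iterate_parent {k : ℕ} {v : V} (h : k ≤ T.depth v) :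
    T.codeLen v (T.parent^[k] v) = k := by
  rw [codeLen, T.depth_iterate_parent, Nat.sub_sub_self h]

theorem injOn_iterate_parent (v : V) :
    Set.InjOn (fun k => T.parent^[k] v) (Set.Iic (T.depth v)) := by
  intro k hk l hl hkl
  rw [← T.codeLen_iterate_parent hk, ← T.codeLen_iterate_parent hl]
  exact congrArg (T.codeLen v) hkl

variable {T}

theorem desc.exists_le_depth {r q : V} (h : T.desc r q) :
    ∃ k ≤ T.depth r, T.parent^[k] r = q := by
  obtain ⟨k, rfl⟩ := h
  rcases le_total k (T.depth r) with hk | hk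
  · exact ⟨k, hk, rfl⟩
  · exact ⟨T.depth r, le_rfl, by rw [T.iterate_parent_eq_root le_rfl, T.iterate_parent_eq_root hk]⟩

theorem sdesc_iff_exists_lt_depth {r q : V} :
    T.sdesc r q ↔ ∃ m < T.depth r, T.parent^[m + 1] r = q := by
  constructor
  · rintro ⟨hdesc, hne⟩
    obtain ⟨k, hk, rfl⟩ := hdesc.exists_le_depth
    cases k with
    | zero => exact absurd rfl hne
    | succ m => exact ⟨m, hk, rfl⟩
  · rintro ⟨m, hm, rfl⟩
    refine ⟨⟨m + 1, rfl⟩, fun heq => m.succ_ne_zero ?_⟩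
    exact T.injOn_iterate_parent r (Set.mem_Iic.2 hm) (Set.mem_Iic.2 (Nat.zero_le _)) heq.symm

theorem prox_iff_exists_firstOccurrence {w : V → ℕ} {r q : V} :
    T.prox w r q ↔
      ∃ m ∈ firstOccurrences (Finset.range (T.depth r)) (fun i => w (T.parent^[i] r)),
        T.parent^[m + 1] r = q := by
  simp only [mem_firstOccurrences, Finset.mem_range]
  rw [prox, sdesc_iff_exists_lt_depth]
  constructor
  · rintro ⟨⟨m, hm, rfl⟩, hfirst⟩
    rw [T.codeLen_iterate_parent hm, Nat.succ_sub_one] at hfirst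
    exact ⟨m, ⟨hm, fun i _ hi => (hfirst i (by omega)).symm⟩, rfl⟩
  · rintro ⟨m, ⟨hm, hfirst⟩, rfl⟩
    refine ⟨⟨m, hm, rfl⟩, ?_⟩
    rw [T.codeLen_iterate_parent hm, Nat.succ_sub_one]
    exact fun i hi => (hfirst i (by omega) (by omega)).symm

variable (T)

/-- The set of weights of the non-root vertices on the path from the root to `q`, that is, the set
of entries of the code of `q` over the root. -/
def pathWeights (w : V → ℕ) (q : V) : Finset ℕ :=
  (Finset.range (T.depth q)).image fun i => w (T.parent^[i] q)

theorem ind_prox_eq_card_pathWeights (w : V → ℕ) (q : V) :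
    ind (T.prox w) q = (T.pathWeights w q).card := by
  let first := firstOccurrences (Finset.range (T.depth q)) fun i => w (T.parent^[i] q)
  have hprox : {p | T.prox w q p} = (fun m => T.parent^[m + 1] q) '' first :=
    Set.ext fun _ => prox_iff_exists_firstOccurrence
  have hinj : Set.InjOn (fun m => T.parent^[m + 1] q) first :=
    (T.injOn_iterate_parent q).comp (add_left_injective 1).injOn fun m hm =>
      Finset.mem_range.1 (mem_firstOccurrences.1 hm).1
  calc ind (T.prox w) q
      = {p | T.prox w q p}.ncard := rfl
    _ = first.card := by rw [hprox, hinj.ncard_image, Set.ncard_coe_finset]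
    _ = (T.pathWeights w q).card := card_firstOccurrences _ _

variable {T}

theorem pathWeights_subset_of_desc (w : V → ℕ) {r q : V} (h : T.desc r q) :
    T.pathWeights w q ⊆ T.pathWeights w r := by
  obtain ⟨k, rfl⟩ := h
  refine Finset.image_subset_iff.2 fun i hi => Finset.mem_image.2 ⟨i + k, ?_, ?_⟩
  · rw [Finset.mem_range, T.depth_iterate_parent] at hi
    exact Finset.mem_range.2 (by omega)
  · rw [Function.iterate_add_apply]

end PTree

theorem prox_ind_monotone_general {V : Type} (T : PTree V) (w : V → ℕ) {r q : V}
    (hrq : T.desc r q) : ind (T.prox w) q ≤ ind (T.prox w) r := by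
  rw [T.ind_prox_eq_card_pathWeights, T.ind_prox_eq_card_pathWeights]
  exact Finset.card_le_card (PTree.pathWeights_subset_of_desc w hrq)

/-- For every `d ≥ 2`, every `d`-weighting `α` of a finite rooted tree,
and all vertices `r ⪰ q`, one has `ind_α r ≥ ind_α q` : the proximity index of the induced
proximity relation is non-decreasing. -/
theorem prox_ind_monotone {V : Type} [Fintype V] (T : PTree V)
    (d : ℕ) (hd : 2 ≤ d) (w : V → ℕ) (hw : T.IsWeighting d w)
    (r q : V) (hrq : T.desc r q) :
    ind (T.prox w) q ≤ ind (T.prox w) r :=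
  prox_ind_monotone_general T w hrq
end
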